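/- Let i > p−2 and let γ ∈ Ĥ_i with J_i(γ) ≠ {0}. Then the Lie ring L_i(γ) = 𝔭^i/J_i(γ) is nilpotent of class c, where c satisfies (c − 3)·(i − (p−2)) ≤ 2p − 8; equivalently c ≤ 3 + (2p−8)/(i−(p−2)). -/

import Mathlib

set_option synthInstance.maxHeartbeats 1000000
set_option maxHeartbeats 1000000

namespace MaximalClassFrame

variable (p : ℕ) [Fact p.Prime]
variable (K : Type) [Field K] [Algebra ℚ_[p] K] [Algebra ℤ_[p] K]
  [IsScalarTower ℤ_[p] ℚ_[p] K]

/-- The maximal order `𝒪` of `K`: the integral closure of `ℤ_p` in `K`. -/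
noncomputable abbrev 𝒪 : Subalgebra ℤ_[p] K := integralClosure ℤ_[p] K

variable (θ : 𝒪 p K)

/-- The maximal ideal `𝔭` of `𝒪`, generated by `κ = θ - 1`. -/
noncomputable def pid : Ideal (𝒪 p K) := Ideal.span {θ - 1}

/-- A `ℤ_p`-bilinear map `γ : 𝒪 × 𝒪 → 𝒪` is `P`-equivariant if it is
alternating and satisfies `γ(θx, θy) = θ·γ(x,y)` for all `x, y`. -/
def IsPEquivariant (γ : 𝒪 p K →ₗ[ℤ_[p]] 𝒪 p K →ₗ[ℤ_[p]] 𝒪 p K) : Prop :=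
  (∀ x, γ x x = 0) ∧ ∀ x y, γ (θ * x) (θ * y) = θ * γ x y

/-- `γ ∈ Ĥ_i`: the additive subgroup of `𝒪` generated by
`{γ(x,y) : x, y ∈ 𝔭^i}` equals `𝔭^(2i+1)`. -/
def InHhat (i : ℕ) (γ : 𝒪 p K →ₗ[ℤ_[p]] 𝒪 p K →ₗ[ℤ_[p]] 𝒪 p K) : Prop :=
  Submodule.span ℤ (Set.image2 (fun x y => γ x y)
      ((pid p K θ ^ i : Ideal (𝒪 p K)) : Set (𝒪 p K))
      ((pid p K θ ^ i : Ideal (𝒪 p K)) : Set (𝒪 p K)))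
    = (pid p K θ ^ (2 * i + 1)).restrictScalars ℤ

variable (γ : 𝒪 p K →ₗ[ℤ_[p]] 𝒪 p K →ₗ[ℤ_[p]] 𝒪 p K)

/-- The ideal `J_i(γ)` of `𝒪` generated by the Jacobi expressions
`γ(γ(x,y),z) + γ(γ(y,z),x) + γ(γ(z,x),y)` for `x, y, z ∈ 𝔭^i`. -/
noncomputable def Jid (i : ℕ) : Ideal (𝒪 p K) :=
  Ideal.span {v : 𝒪 p K | ∃ x ∈ pid p K θ ^ i, ∃ y ∈ pid p K θ ^ i, ∃ z ∈ pid p K θ ^ i,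
    v = γ (γ x y) z + γ (γ y z) x + γ (γ z x) y}

/-- The ideals `W_k(i)`:  `W_1(i) = 𝔭^i` and `W_{k+1}(i)` is the ideal
generated by `{γ(x,y) : x ∈ W_k(i), y ∈ 𝔭^i}`. -/
noncomputable def Wid (i : ℕ) : ℕ → Ideal (𝒪 p K)
  | 0 => ⊤
  | 1 => pid p K θ ^ i
  | (k + 2) => Ideal.span (Set.image2 (fun x y => γ x y)
      ((Wid i (k + 1) : Ideal (𝒪 p K)) : Set (𝒪 p K))
      ((pid p K θ ^ i : Ideal (𝒪 p K)) : Set (𝒪 p K)))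

/-!
Identify `𝔭 ^ i` with `𝒪` through multiplication by `κ ^ i`, so that `γ` becomes an equivariant form
`ε` on `𝒪`. Let `e` be the largest integer such that `ε` maps `𝔭 ^ a × 𝔭 ^ b` into `𝔭 ^ (a + b + e)`
for all `a` and `b`. Since `p` is associated to `κ ^ (p - 1)`, the hypothesis on `γ` gives
`e ≥ i + 3 - p`. The coefficients `α a b` modulo `𝔭` of `κ ^ (a + b + e)` in `ε (κ ^ a) (κ ^ b)` are
periodic of period `p - 1` in `a` and `b`, and a discrete Mellin transform over the characters
`l ↦ z ^ l` diagonalises equivariance: it turns `α` into the structure constants of a bracket on a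
`ZMod p`-graded algebra with one-dimensional components in which the component of degree `0` is
central and the bracket is homogeneous under scaling of the degrees.

If every Jacobi expression of `ε` in powers of `κ` vanished to leading order, this algebra would be
a Lie algebra with nilpotent homogeneous adjoint maps, and the Engel–Jacobson theorem together with
scaling would force all its brackets, hence `α`, to vanish, contradicting the choice of `e`. So some
Jacobi expression of `κ ^ a`, `κ ^ b`, `1` with `a, b ≤ p - 2` has order exactly `a + b + 2 * e`,
which places `𝔭 ^ (i + 2 * (p - 2) + 2 * e)` inside `J_i(γ)`. As `W_(k + 2)` lies in
`𝔭 ^ (2 * i + 1 + k * e)`, comparing exponents bounds the class.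
-/

section Engel

variable {G : Type*} [AddCommMonoid G]

/-- If `R x y` says that the bracket of the homogeneous components of degrees `x` and `y` of a
`G`-graded Lie ring is nonzero, the components with degrees in `A` span a subring. -/
def IsBracketClosed (R : G → G → Prop) (A : Set G) : Prop :=
  ∀ x ∈ A, ∀ y ∈ A, R x y → x + y ∈ A

/-- The combinatorial shadow of a graded module over the subring with degrees in `A`, each
homogeneous component of which acts nilpotently: `T d x` says that the component of degree `d`
acts nontrivially on the component of degree `x` of the module. -/
structure IsNilpotentAction (R T : G → G → Prop) (A : Set G) : Prop where
  jacobi : ∀ d ∈ A, ∀ b ∈ A, ∀ x, T b x → T d (b + x) → (R d b ∧ T (d + b) x) ∨ T d x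
  exists_not : ∀ b ∈ A, ∀ x, ∃ m : ℕ, ¬T b (m • b + x)

/-- The conclusion of Engel's theorem for the subring with degrees in `A`: every nonzero
submodule `X` of a module with nilpotent action has a component annihilated by the subring. -/
def HasAnnihilatedWeight (R : G → G → Prop) (A : Set G) : Prop :=
  ∀ T, IsNilpotentAction R T A → ∀ X : Set G, X.Nonempty →
    (∀ d ∈ A, ∀ x ∈ X, T d x → d + x ∈ X) → ∃ x ∈ X, ∀ d ∈ A, ¬T d x

variable {R T : G → G → Prop} {A B : Set G}

theorem IsNilpotentAction.mono (hT : IsNilpotentAction R T B) (hAB : A ⊆ B) :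
    IsNilpotentAction R T A where
  jacobi d hd b hb := hT.jacobi d (hAB hd) b (hAB hb)
  exists_not b hb := hT.exists_not b (hAB hb)

protected theorem IsBracketClosed.insert {b : G} (hA : IsBracketClosed R A)
    (hb : ∀ d ∈ A, R d b → d + b ∈ A) (hirrefl : ∀ x, ¬R x x) (hsymm : ∀ x y, R x y → R y x) :
    IsBracketClosed R (insert b A) := by
  rintro x (rfl | hx) y (rfl | hy) hxy
  · exact (hirrefl _ hxy).elim
  · exact .inr (add_comm y x ▸ hb y hy (hsymm _ _ hxy))
  · exact .inr (hb x hx hxy)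
  · exact .inr (hA x hx y hy hxy)

/-- The components annihilated by `A` form a submodule stable under `b`, on which `b` is
nilpotent. -/
protected theorem HasAnnihilatedWeight.insert {b : G} (hA : HasAnnihilatedWeight R A)
    (hb : ∀ d ∈ A, R d b → d + b ∈ A) : HasAnnihilatedWeight R (insert b A) := by
  intro T hT X hX hstable
  have hbA : b ∈ insert b A := Set.mem_insert b A
  have hsub : A ⊆ insert b A := Set.subset_insert b A
  obtain ⟨x, hxX, hx⟩ := hA T (hT.mono hsub) X hX fun d hd => hstable d (hsub hd)
  let Y : Set G := {y ∈ X | ∀ d ∈ A, ¬T d y}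
  have stable_Y {y : G} (hy : y ∈ Y) (hby : T b y) : b + y ∈ Y := by
    refine ⟨hstable b hbA y hy.1 hby, fun d hd hdy => ?_⟩
    rcases hT.jacobi d (hsub hd) b hbA y hby hdy with ⟨hdb, h⟩ | h
    · exact hy.2 _ (hb d hd hdb) h
    · exact hy.2 d hd h
  classical
  let n := Nat.find (hT.exists_not b hbA x)
  have orbit_mem_Y (m : ℕ) (hm : m ≤ n) : m • b + x ∈ Y := by
    induction m with
    | zero => simpa [Y] using ⟨hxX, hx⟩
    | succ m ih =>
      rw [succ_nsmul', add_assoc]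
      exact stable_Y (ih (by lia)) (not_not.1 (Nat.find_min _ hm))
  refine ⟨n • b + x, (orbit_mem_Y n le_rfl).1, ?_⟩
  rintro d (rfl | hd)
  · exact Nat.find_spec (hT.exists_not d hbA x)
  · exact (orbit_mem_Y n le_rfl).2 d hd

/-- Jacobson's form of Engel's theorem, in the style of its classical proof: a maximal closed `A`
with the property acts on the complement of `A`, and an annihilated weight there normalizes `A`. -/
theorem hasAnnihilatedWeight_univ [Finite G] (hirrefl : ∀ x, ¬R x x)
    (hsymm : ∀ x y, R x y → R y x)
    (hjacobi : ∀ d b x, R b x → R d (b + x) → (R d b ∧ R (d + b) x) ∨ (R d x ∧ R b (d + x)))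
    (hnil : ∀ b x, ∃ m : ℕ, ¬R b (m • b + x)) : HasAnnihilatedWeight R Set.univ := by
  have hempty : IsBracketClosed R ∅ ∧ HasAnnihilatedWeight R ∅ :=
    ⟨fun _ h => h.elim, fun _ _ X ⟨x, hx⟩ _ => ⟨x, hx, fun _ h => h.elim⟩⟩
  obtain ⟨A, -, hA⟩ :=
    (Set.toFinite {A | IsBracketClosed R A ∧ HasAnnihilatedWeight R A}).exists_le_maximal hempty
  obtain ⟨hclosed, hann⟩ := hA.prop
  suffices A = Set.univ from this ▸ hann
  by_contra hne
  let T (d x : G) : Prop := R d x ∧ d + x ∉ A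
  have hT : IsNilpotentAction R T A := by
    refine ⟨fun d _ b hb x ⟨hbx, _⟩ ⟨hdbx, hdbxA⟩ => ?_, fun b _ x => ?_⟩
    · rcases hjacobi d b x hbx hdbx with ⟨hdb, h⟩ | ⟨hdx, h⟩
      · exact .inl ⟨hdb, h, by rwa [add_assoc]⟩
      · exact .inr ⟨hdx, fun hdxA => hdbxA (add_left_comm b d x ▸ hclosed b hb _ hdxA h)⟩
    · exact (hnil b x).imp fun m hm h => hm h.1
  obtain ⟨b, hbA, hb⟩ := hann T hT Aᶜ (Set.nonempty_compl.2 hne) fun d _ x _ h => h.2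
  have hbnorm (d : G) (hd : d ∈ A) (hdb : R d b) : d + b ∈ A :=
    not_not.1 fun h => hb d hd ⟨hdb, h⟩
  have := hA.le_of_ge ⟨hclosed.insert hbnorm hirrefl hsymm, hann.insert hbnorm⟩
    (Set.subset_insert b A)
  exact hbA (this (Set.mem_insert b A))

end Engel

section Mellin

open Finset

variable {p : ℕ}

/-- The laws satisfied by the leading coefficients of an alternating equivariant map: `α j k` is the
residue of the leading coefficient of `ε (κ ^ j) (κ ^ k)`. -/
structure IsEquivariantSystem (α : ℕ → ℕ → ZMod p) : Prop where
  periodic : Function.Periodic α (p - 1)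
  self : ∀ j, α j j = 0
  neg_swap : ∀ j k, -α j k = α k j
  eq_add : ∀ j k, α j k = α (j + 1) k + α j (k + 1)

/-- The leading coefficient of the Jacobi expression in `κ ^ a`, `κ ^ b`, `κ ^ c` for a map raising
orders by `h` with leading coefficients `α`. -/
def jacobiDefect (α : ℕ → ℕ → ZMod p) (h a b c : ℕ) : ZMod p :=
  α a b * α (a + b + h) c + α b c * α (b + c + h) a + α c a * α (c + a + h) b

namespace IsEquivariantSystem

variable {α : ℕ → ℕ → ZMod p} (hα : IsEquivariantSystem α)
include hα

theorem periodic_right (j : ℕ) : (α j).Periodic (p - 1) := fun k => by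
  rw [← hα.neg_swap, hα.periodic k, hα.neg_swap]

theorem jacobiDefect_eq_add (h a b c : ℕ) : jacobiDefect α h a b c =
    jacobiDefect α h (a + 1) b c + jacobiDefect α h a (b + 1) c + jacobiDefect α h a b (c + 1) := by
  have hterm (a b c : ℕ) : α a b * α (a + b + h) c = α (a + 1) b * α (a + 1 + b + h) c +
      α a (b + 1) * α (a + (b + 1) + h) c + α a b * α (a + b + h) (c + 1) := by
    rw [show a + 1 + b + h = a + b + h + 1 by ring, show a + (b + 1) + h = a + b + h + 1 by ring]
    linear_combination α (a + b + h + 1) c * hα.eq_add a b + α a b * hα.eq_add (a + b + h) c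
  rw [jacobiDefect, hterm a b c, hterm b c a, hterm c a b]
  simp only [jacobiDefect]
  ring

end IsEquivariantSystem

variable [Fact p.Prime]

/-- The discrete Mellin transform of a sequence of period `p - 1`, the variable `z` standing for the
multiplicative character `l ↦ z ^ l`. As `0⁻¹ = 0`, the value at `z = 0` is `f 0`. -/
def mellinSum (f : ℕ → ZMod p) (z : ZMod p) : ZMod p :=
  ∑ l ∈ range (p - 1), f l * z⁻¹ ^ l

variable {f : ℕ → ZMod p} {z : ZMod p}

theorem mellinSum_zero_right (f : ℕ → ZMod p) : mellinSum f 0 = f 0 := by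
  have hp : 0 < p - 1 := Nat.sub_pos_of_lt (Fact.out : p.Prime).one_lt
  simp [mellinSum, zero_pow_eq, hp]

theorem mellinSum_const_mul (c : ZMod p) (f : ℕ → ZMod p) (z : ZMod p) :
    mellinSum (fun l => c * f l) z = c * mellinSum f z := by
  simp only [mellinSum, mul_sum, mul_assoc]

theorem mellinSum_mul_const (c : ZMod p) (f : ℕ → ZMod p) (z : ZMod p) :
    mellinSum (fun l => f l * c) z = mellinSum f z * c := by
  simp only [mul_comm _ c, mellinSum_const_mul]

theorem mellinSum_add (f g : ℕ → ZMod p) (z : ZMod p) :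
    mellinSum (fun l => f l + g l) z = mellinSum f z + mellinSum g z := by
  simp only [mellinSum, add_mul, sum_add_distrib]

theorem mellinSum_neg (f : ℕ → ZMod p) (z : ZMod p) :
    mellinSum (fun l => -f l) z = -mellinSum f z := by
  simp only [mellinSum, neg_mul, sum_neg_distrib]

theorem mellinSum_mul_pow (f : ℕ → ZMod p) (t z : ZMod p) :
    mellinSum (fun l => f l * t ^ l) z = mellinSum f (z / t) := by
  simp only [mellinSum, inv_div, div_eq_mul_inv t z, mul_pow, mul_assoc]

theorem mellinSum_comm (f : ℕ → ℕ → ZMod p) (y z : ZMod p) :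
    mellinSum (fun j => mellinSum (f j) z) y =
      mellinSum (fun k => mellinSum (fun j => f j k) y) z := by
  simp only [mellinSum, sum_mul]
  rw [sum_comm]
  simp only [mul_right_comm]

theorem mellinSum_pow_self (hz : z ≠ 0) : mellinSum (z ^ ·) z = -1 := by
  have hp : 1 ≤ p := (Fact.out : p.Prime).one_lt.le
  simp only [mellinSum, ← mul_pow, mul_inv_cancel₀ hz, one_pow, sum_const, card_range, nsmul_one]
  simp [Nat.cast_sub hp]

theorem mellinSum_shift (hf : f.Periodic (p - 1)) (hz : z ≠ 0) :
    mellinSum (fun l => f (l + 1)) z = z * mellinSum f z := by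
  have hend : f (p - 1) * z⁻¹ ^ (p - 1) = f 0 * z⁻¹ ^ 0 := by
    rw [ZMod.pow_card_sub_one_eq_one (inv_ne_zero hz), pow_zero, ← hf 0, zero_add]
  calc mellinSum (fun l => f (l + 1)) z
      = z * ∑ l ∈ range (p - 1), f (l + 1) * z⁻¹ ^ (l + 1) := by
        rw [mellinSum, mul_sum]
        refine sum_congr rfl fun l _ => ?_
        rw [pow_succ]
        field_simp
    _ = z * mellinSum f z := by
        have := (sum_range_succ' (fun l => f l * z⁻¹ ^ l) (p - 1)).symm.trans
          (sum_range_succ _ _)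
        rw [hend, add_left_inj] at this
        rw [this, mellinSum]

theorem eq_zero_of_mellinSum_eq_zero (hf : f.Periodic (p - 1))
    (h : ∀ z : ZMod p, z ≠ 0 → mellinSum f z = 0) (l : ℕ) : f l = 0 := by
  have hp : 0 < p - 1 := Nat.sub_pos_of_lt (Fact.out : p.Prime).one_lt
  let P : Polynomial (ZMod p) := ∑ l ∈ range (p - 1), .C (f l) * .X ^ l
  have hP : P = 0 := by
    refine Polynomial.eq_zero_of_natDegree_lt_card_of_eval_eq_zero P
      (f := ((↑) : (ZMod p)ˣ → ZMod p)) Units.val_injective (fun u => ?_) ?_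
    · have := h (u : ZMod p)⁻¹ (inv_ne_zero u.ne_zero)
      rw [mellinSum, inv_inv] at this
      rw [Polynomial.eval_finsetSum, ← this]
      simp only [Polynomial.eval_mul, Polynomial.eval_C, Polynomial.eval_pow, Polynomial.eval_X]
    · rw [ZMod.card_units]
      refine Nat.lt_of_le_pred hp (Polynomial.natDegree_sum_le_of_forall_le _ _ fun l hl => ?_)
      exact (Polynomial.natDegree_C_mul_X_pow_le _ _).trans (Nat.le_pred_of_lt (mem_range.1 hl))
  have := congr_arg (Polynomial.coeff · (l % (p - 1))) hP
  rw [← hf.map_mod_nat l]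
  simpa [P, Polynomial.finsetSum_coeff, Polynomial.coeff_C_mul, Polynomial.coeff_X_pow,
    Nat.mod_lt l hp] using this

theorem mellinSum_rotate (f : ℕ → ℕ → ℕ → ZMod p) (x y z : ZMod p) :
    mellinSum (fun a => mellinSum (fun b => mellinSum (fun c => f b c a) z) y) x =
      mellinSum (fun b => mellinSum (fun c => mellinSum (f b c) x) z) y := by
  rw [mellinSum_comm]
  exact congr_arg (mellinSum · y) (funext fun b => mellinSum_comm _ x z)

/-- For the equivariant system `α` of a map raising orders by `h`, the structure constant of the
bracket of the components of degrees `x` and `y` in the `ZMod p`-graded algebra obtained from the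
leading terms by Mellin transform. -/
def weightBracket (α : ℕ → ℕ → ZMod p) (h : ℕ) (x y : ZMod p) : ZMod p :=
  (x + y) ^ h * mellinSum (α 0) (y / (x + y))

theorem weightBracket_mul_mul (α : ℕ → ℕ → ZMod p) (h : ℕ) {t : ZMod p} (ht : t ≠ 0)
    (x y : ZMod p) :
    weightBracket α h (t * x) (t * y) = t ^ h * weightBracket α h x y := by
  rw [weightBracket, weightBracket, ← mul_add, mul_pow, mul_div_mul_left _ _ ht, mul_assoc]

namespace IsEquivariantSystem

variable {α : ℕ → ℕ → ZMod p} {x y z : ZMod p} {h : ℕ} (hα : IsEquivariantSystem α)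
include hα

theorem mellinSum_eq (hz : z ≠ 0) (n : ℕ) :
    mellinSum (α n) z = (1 - z) ^ n * mellinSum (α 0) z := by
  induction n with
  | zero => simp
  | succ n ih =>
    have hadd : mellinSum (α n) z = mellinSum (α (n + 1)) z + z * mellinSum (α n) z := by
      rw [← mellinSum_shift (hα.periodic_right n) hz, ← mellinSum_add]
      exact congr_arg (mellinSum · z) (funext (hα.eq_add n))
    rw [pow_succ', mul_assoc, ← ih]
    linear_combination -hadd

theorem mellinSum_zero : mellinSum (α 0) 0 = 0 := by
  rw [mellinSum_zero_right, hα.self]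

theorem mellinSum_one : mellinSum (α 0) 1 = 0 := by
  have hp : p - 1 ≠ 0 := (Nat.sub_pos_of_lt (Fact.out : p.Prime).one_lt).ne'
  have hper : α (p - 1) = α 0 := by
    rw [← hα.periodic 0, zero_add]
  simpa [hp, hper] using hα.mellinSum_eq one_ne_zero (p - 1)

theorem mellinSum_mellin (hx : x ≠ 0) (hy : y ≠ 0) (hxy : x + y = 1) :
    mellinSum (fun j => mellinSum (α j) y) x = -mellinSum (α 0) y := by
  obtain rfl : x = 1 - y := eq_sub_of_add_eq hxy
  rw [funext (hα.mellinSum_eq hy), mellinSum_mul_const, mellinSum_pow_self hx, neg_one_mul]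

theorem mellinSum_neg_swap (hxy : x + y = 1) : mellinSum (α 0) x = -mellinSum (α 0) y := by
  rcases eq_or_ne x 0 with rfl | hx
  · rw [zero_add] at hxy
    rw [hxy, hα.mellinSum_zero, hα.mellinSum_one, neg_zero]
  rcases eq_or_ne y 0 with rfl | hy
  · rw [add_zero] at hxy
    rw [hxy, hα.mellinSum_zero, hα.mellinSum_one, neg_zero]
  calc mellinSum (α 0) x = -mellinSum (fun k => mellinSum (α k) x) y := by
        rw [hα.mellinSum_mellin hy hx (by rw [add_comm, hxy]), neg_neg]
    _ = mellinSum (fun k => mellinSum (fun j => α j k) x) y := by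
        simp only [← mellinSum_neg, hα.neg_swap]
    _ = -mellinSum (α 0) y := by rw [← mellinSum_comm, hα.mellinSum_mellin hx hy hxy]

theorem weightBracket_zero_left (y : ZMod p) : weightBracket α h 0 y = 0 := by
  rcases eq_or_ne y 0 with rfl | hy
  · simp [weightBracket, hα.mellinSum_zero]
  · simp [weightBracket, div_self hy, hα.mellinSum_one]

theorem weightBracket_eq_zero_of_add (hxy : x + y = 0) : weightBracket α h x y = 0 := by
  simp [weightBracket, hxy, hα.mellinSum_zero]

theorem weightBracket_zero_right (x : ZMod p) : weightBracket α h x 0 = 0 := by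
  simp [weightBracket, hα.mellinSum_zero]

theorem weightBracket_swap (x y : ZMod p) : weightBracket α h y x = -weightBracket α h x y := by
  rcases eq_or_ne (x + y) 0 with hxy | hxy
  · rw [hα.weightBracket_eq_zero_of_add hxy,
      hα.weightBracket_eq_zero_of_add (by rwa [add_comm]), neg_zero]
  · rw [weightBracket, weightBracket, add_comm y x, hα.mellinSum_neg_swap (y := y / (x + y)),
      mul_neg]
    field_simp

theorem weightBracket_self (x : ZMod p) : weightBracket α h x x = 0 := by
  rcases eq_or_ne (2 : ZMod p) 0 with h2 | h2
  · exact hα.weightBracket_eq_zero_of_add (by rw [← two_mul, h2, zero_mul])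
  · have := hα.weightBracket_swap (h := h) x x
    rw [eq_neg_iff_add_eq_zero, ← two_mul] at this
    exact (mul_eq_zero.1 this).resolve_left h2

theorem mellinSum_leading_bracket (hx : x ≠ 0) (hy : y ≠ 0) (hz : z ≠ 0) (hxyz : x + y + z = 1) :
    mellinSum (fun a => mellinSum (fun b => mellinSum (fun c => α a b * α (a + b + h) c) z) y) x =
      -(weightBracket α h x y * weightBracket α h (x + y) z) := by
  have hs : 1 - z = x + y := by rw [← hxyz, add_sub_cancel_right]
  have hinner (a b : ℕ) : mellinSum (fun c => α a b * α (a + b + h) c) z =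
      (x + y) ^ h * mellinSum (α 0) z * (α a b * (x + y) ^ b * (x + y) ^ a) := by
    rw [mellinSum_const_mul, hα.mellinSum_eq hz, hs]
    ring
  simp only [hinner, mellinSum_const_mul, mellinSum_mul_const, mellinSum_mul_pow]
  rw [weightBracket, weightBracket, hxyz, div_one, one_pow, one_mul]
  rcases eq_or_ne (x + y) 0 with h0 | h0
  · obtain rfl : z = 1 := by rwa [h0, zero_add] at hxyz
    simp [hα.mellinSum_one]
  · rw [hα.mellinSum_mellin (div_ne_zero hx h0) (div_ne_zero hy h0) (by field_simp)]
    ring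

theorem weightBracket_jacobi_of_add_eq_one (hdefect : ∀ a b c, jacobiDefect α h a b c = 0)
    (hx : x ≠ 0) (hy : y ≠ 0) (hz : z ≠ 0) (hxyz : x + y + z = 1) :
    weightBracket α h x y * weightBracket α h (x + y) z +
      weightBracket α h y z * weightBracket α h (y + z) x +
      weightBracket α h z x * weightBracket α h (z + x) y = 0 := by
  let g (a b c : ℕ) : ZMod p := α a b * α (a + b + h) c
  have hg : mellinSum (fun a => mellinSum (fun b => mellinSum
      (fun c => g a b c + g b c a + g c a b) z) y) x = 0 := by
    have (a b c : ℕ) : g a b c + g b c a + g c a b = 0 := hdefect a b c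
    simp [this, mellinSum]
  simp only [mellinSum_add] at hg
  rw [mellinSum_rotate g x y z, mellinSum_rotate (fun b c a => g c a b) x y z,
    mellinSum_rotate g y z x,
    hα.mellinSum_leading_bracket hx hy hz hxyz,
    hα.mellinSum_leading_bracket hy hz hx (by rw [← hxyz]; ring),
    hα.mellinSum_leading_bracket hz hx hy (by rw [← hxyz]; ring)] at hg
  linear_combination -hg

theorem weightBracket_jacobi (hdefect : ∀ a b c, jacobiDefect α h a b c = 0) (x y z : ZMod p) :
    weightBracket α h x y * weightBracket α h (x + y) z +
      weightBracket α h y z * weightBracket α h (y + z) x +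
      weightBracket α h z x * weightBracket α h (z + x) y = 0 := by
  rcases eq_or_ne x 0 with rfl | hx
  · simp [hα.weightBracket_zero_left, hα.weightBracket_zero_right]
  rcases eq_or_ne y 0 with rfl | hy
  · simp [hα.weightBracket_zero_left, hα.weightBracket_zero_right]
  rcases eq_or_ne z 0 with rfl | hz
  · simp [hα.weightBracket_zero_left, hα.weightBracket_zero_right]
  rcases eq_or_ne (x + y + z) 0 with hs | hs
  · rw [hα.weightBracket_eq_zero_of_add hs,
      hα.weightBracket_eq_zero_of_add (x := y + z) (by rw [← hs]; ring),
      hα.weightBracket_eq_zero_of_add (x := z + x) (by rw [← hs]; ring)]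
    simp
  have ht : (x + y + z)⁻¹ ≠ 0 := inv_ne_zero hs
  have := hα.weightBracket_jacobi_of_add_eq_one hdefect (mul_ne_zero ht hx) (mul_ne_zero ht hy)
    (mul_ne_zero ht hz) (by rw [← mul_add, ← mul_add, inv_mul_cancel₀ hs])
  simp only [← mul_add, weightBracket_mul_mul α h ht] at this
  refine (mul_eq_zero.1 ?_).resolve_left (pow_ne_zero (2 * h) ht)
  rw [← this]
  ring

/-- Engel's theorem yields a component on which all the others act trivially; scale symmetry then
makes every bracket vanish. -/
theorem eq_zero_of_jacobiDefect (hdefect : ∀ a b c, jacobiDefect α h a b c = 0) (j k : ℕ) :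
    α j k = 0 := by
  let R (x y : ZMod p) : Prop := weightBracket α h x y ≠ 0
  have hsymm (x y : ZMod p) (hxy : R x y) : R y x := by
    simpa [R, hα.weightBracket_swap x y] using hxy
  have hjacobi (d b x : ZMod p) (hbx : R b x) (hdbx : R d (b + x)) :
      (R d b ∧ R (d + b) x) ∨ (R d x ∧ R b (d + x)) := by
    by_contra! hcon
    have hbxd : weightBracket α h b x * weightBracket α h (b + x) d ≠ 0 :=
      mul_ne_zero hbx (hsymm _ _ hdbx)
    have hdbx' : weightBracket α h d b * weightBracket α h (d + b) x = 0 := by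
      simpa [R, or_iff_not_imp_left] using hcon.1
    have hxdb : weightBracket α h x d * weightBracket α h (x + d) b = 0 := by
      rw [hα.weightBracket_swap d x, hα.weightBracket_swap b, neg_mul_neg, add_comm x]
      simpa [R, or_iff_not_imp_left] using hcon.2
    exact hbxd (by simpa [hdbx', hxdb] using hα.weightBracket_jacobi hdefect d b x)
  have hnil (b x : ZMod p) : ∃ m : ℕ, ¬R b (m • b + x) := by
    rcases eq_or_ne b 0 with rfl | hb
    · exact ⟨0, not_not.2 (hα.weightBracket_zero_left _)⟩
    · refine ⟨(-x / b).val, not_not.2 ?_⟩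
      rw [nsmul_eq_mul, ZMod.natCast_zmod_val, div_mul_cancel₀ _ hb, neg_add_cancel,
        hα.weightBracket_zero_right]
  have hself (x : ZMod p) : ¬R x x := not_not.2 (hα.weightBracket_self x)
  have hR : IsNilpotentAction R R Set.univ :=
    ⟨fun d _ b _ x hbx hdbx => (hjacobi d b x hbx hdbx).imp_right And.left, fun b _ => hnil b⟩
  obtain ⟨x, hx, hxR⟩ := hasAnnihilatedWeight_univ hself hsymm hjacobi hnil R hR {x | x ≠ 0}
    ⟨1, one_ne_zero⟩ fun d _ x _ hdx hadd => hdx (hα.weightBracket_eq_zero_of_add hadd)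
  have hmellin (z : ZMod p) (hz : z ≠ 0) : mellinSum (α 0) z = 0 := by
    have hxz : x / z ≠ 0 := div_ne_zero hx hz
    have := not_not.1 (hxR (x / z - x) trivial)
    rwa [weightBracket, sub_add_cancel, div_div_cancel₀ hx, mul_eq_zero_iff_left
      (pow_ne_zero h hxz)] at this
  induction j generalizing k with
  | zero => exact eq_zero_of_mellinSum_eq_zero (hα.periodic_right 0) hmellin k
  | succ j ih => simpa [ih] using (hα.eq_add j k).symm

theorem exists_jacobiDefect_ne_zero (h : ℕ) (hne : ∃ j k, α j k ≠ 0) :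
    ∃ a < p - 1, ∃ b < p - 1, jacobiDefect α h a b 0 ≠ 0 := by
  have hp : 0 < p - 1 := Nat.sub_pos_of_lt (Fact.out : p.Prime).one_lt
  by_contra! hcon
  have hfst (b c : ℕ) : (jacobiDefect α h · b c).Periodic (p - 1) := fun a => by
    simp only [jacobiDefect, hα.periodic a, hα.periodic_right _ a, add_right_comm a (p - 1),
      ← add_assoc, add_right_comm _ (p - 1), hα.periodic _]
  have hsnd (a c : ℕ) : (jacobiDefect α h a · c).Periodic (p - 1) := fun b => by
    simp only [jacobiDefect, hα.periodic b, hα.periodic_right _ b, add_right_comm b (p - 1),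
      ← add_assoc, add_right_comm _ (p - 1), hα.periodic _]
  have hzero (a b c : ℕ) : jacobiDefect α h a b c = 0 := by
    induction c generalizing a b with
    | zero =>
      rw [← (hfst b 0).map_mod_nat a, ← (hsnd _ 0).map_mod_nat b]
      exact hcon _ (Nat.mod_lt a hp) _ (Nat.mod_lt b hp)
    | succ c ih => simpa [ih] using (hα.jacobiDefect_eq_add h a b c).symm
  obtain ⟨j, k, hjk⟩ := hne
  exact hjk (hα.eq_zero_of_jacobiDefect hzero j k)

end IsEquivariantSystem

end Mellin

section BilinearMap

variable {p : ℕ} {R B : Type*} [CommRing B] [CommSemiring R] [Module R B]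

/-- `ε` maps `𝔭 ^ a × 𝔭 ^ b` into `𝔭 ^ (a + b + d)`, where `𝔭` is generated by `κ`. -/
def RaisesOrderBy (κ : B) (ε : B →ₗ[R] B →ₗ[R] B) (d : ℕ) : Prop :=
  ∀ a b x y, κ ^ (a + b + d) ∣ ε (κ ^ a * x) (κ ^ b * y)

/-- The cyclic sum whose vanishing is the Jacobi identity for `ε`. -/
def jacobiator (ε : B →ₗ[R] B →ₗ[R] B) (x y z : B) : B :=
  ε (ε x y) z + ε (ε y z) x + ε (ε z x) y

theorem map_natCast_mul_left (ε : B →ₗ[R] B →ₗ[R] B) (n : ℕ) (x y : B) :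
    ε (n * x) y = n * ε x y := by
  simp only [← nsmul_eq_mul, map_nsmul, LinearMap.smul_apply]

theorem map_natCast_mul_right (ε : B →ₗ[R] B →ₗ[R] B) (n : ℕ) (x y : B) :
    ε x (n * y) = n * ε x y := by
  simp only [← nsmul_eq_mul, map_nsmul]

theorem map_mul_eq_sub {κ : B} {ε : B →ₗ[R] B →ₗ[R] B}
    (hequiv : ∀ x y, ε ((1 + κ) * x) ((1 + κ) * y) = (1 + κ) * ε x y) (x y : B) :
    ε ((1 + κ) * x) (κ * y) = κ * ε x y - ε (κ * x) y := by
  have hleft : ε ((1 + κ) * x) y = ε x y + ε (κ * x) y := by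
    rw [one_add_mul, map_add, LinearMap.add_apply]
  have hright : ε ((1 + κ) * x) ((1 + κ) * y) = ε ((1 + κ) * x) y + ε ((1 + κ) * x) (κ * y) := by
    rw [one_add_mul κ y, map_add]
  linear_combination hequiv x y - hright - hleft

/-- `ε` raises orders by `d`, and `α j k` is the leading coefficient modulo `𝔭` of its values on
`𝔭 ^ j × 𝔭 ^ k`, with `ρ` the reduction modulo `𝔭`. -/
def IsLeading (κ : B) (ρ : B →+* ZMod p) (ε : B →ₗ[R] B →ₗ[R] B) (d : ℕ)
    (α : ℕ → ℕ → ZMod p) : Prop :=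
  ∀ j k x y, ∃ r, ε (κ ^ j * x) (κ ^ k * y) = κ ^ (j + k + d) * r ∧ ρ r = α j k * ρ x * ρ y

namespace IsLeading

variable {κ : B} {ε : B →ₗ[R] B →ₗ[R] B} {ρ : B →+* ZMod p} {d : ℕ} {α : ℕ → ℕ → ZMod p}
  (hα : IsLeading κ ρ ε d α)
include hα

theorem coeff_eq [IsDomain B] (hκ : κ ≠ 0) {j k : ℕ} {x y r : B}
    (hr : ε (κ ^ j * x) (κ ^ k * y) = κ ^ (j + k + d) * r) : ρ r = α j k * ρ x * ρ y := by
  obtain ⟨s, hs, hρ⟩ := hα j k x y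
  rwa [mul_left_cancel₀ (pow_ne_zero _ hκ) (hr.symm.trans hs)]

theorem periodic [IsDomain B] (hκ : κ ≠ 0) (hpκ : Associated (p : B) (κ ^ (p - 1))) :
    Function.Periodic α (p - 1) := fun j => by
  ext k
  obtain ⟨u, hu⟩ := hpκ
  obtain ⟨r, hr, hρ⟩ := hα j k u 1
  have hshift : ε (κ ^ (j + (p - 1)) * 1) (κ ^ k * 1) =
      κ ^ (j + (p - 1) + k + d) * (↑u⁻¹ * r) := by
    have hpow : κ ^ (j + (p - 1)) * 1 = p * (κ ^ j * u) := by
      rw [pow_add, ← hu]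
      ring
    have hp : (p : B) = κ ^ (p - 1) * ↑u⁻¹ := (Units.eq_mul_inv_iff_mul_eq u).2 hu
    rw [hpow, map_natCast_mul_left, hr, hp]
    ring
  have hunit : ρ ↑u⁻¹ * ρ u = 1 := by rw [← map_mul, Units.inv_mul, map_one]
  have hcoeff := hα.coeff_eq hκ hshift
  simp only [map_mul, hρ, map_one, mul_one] at hcoeff
  linear_combination α j k * hunit - hcoeff

theorem exists_map_map_eq (a b c : ℕ) : ∃ r, ε (ε (κ ^ a) (κ ^ b)) (κ ^ c) =
    κ ^ (a + b + c + 2 * d) * r ∧ ρ r = α a b * α (a + b + d) c := by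
  obtain ⟨r, hr, hρ⟩ := hα a b 1 1
  obtain ⟨s, hs, hσ⟩ := hα (a + b + d) c r 1
  simp only [mul_one, map_one] at hr hρ hs hσ
  refine ⟨s, ?_, by rw [hσ, hρ, mul_comm]⟩
  rw [hr, hs]
  ring

theorem exists_jacobiator_eq (a b c : ℕ) : ∃ r, jacobiator ε (κ ^ a) (κ ^ b) (κ ^ c) =
    κ ^ (a + b + c + 2 * d) * r ∧ ρ r = jacobiDefect α d a b c := by
  obtain ⟨r, hr, hρ⟩ := hα.exists_map_map_eq a b c
  obtain ⟨s, hs, hσ⟩ := hα.exists_map_map_eq b c a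
  obtain ⟨t, ht, hτ⟩ := hα.exists_map_map_eq c a b
  refine ⟨r + s + t, ?_, by rw [map_add, map_add, hρ, hσ, hτ, jacobiDefect]⟩
  rw [jacobiator, hr, hs, ht]
  ring

end IsLeading

end BilinearMap

section Leading

variable {p : ℕ} [Fact p.Prime] {R B : Type*} [CommRing B] [IsDomain B]
  [IsDiscreteValuationRing B] {κ : B}

theorem dvd_iff_map_zmod_eq_zero (hκ : Irreducible κ) (ρ : B →+* ZMod p) {x : B} :
    κ ∣ x ↔ ρ x = 0 := by
  have := RingHom.ker_isMaximal_of_surjective ρ (ZMod.ringHom_surjective ρ)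
  rw [← Ideal.mem_span_singleton, ← hκ.maximalIdeal_eq, ← RingHom.mem_ker,
    IsLocalRing.eq_maximalIdeal this]

theorem isUnit_of_map_zmod_ne_zero (hκ : Irreducible κ) (ρ : B →+* ZMod p) {x : B}
    (hx : ρ x ≠ 0) : IsUnit x := by
  rwa [Ne, ← dvd_iff_map_zmod_eq_zero hκ, ← Ideal.mem_span_singleton, ← hκ.maximalIdeal_eq,
    IsLocalRing.notMem_maximalIdeal] at hx

theorem exists_eq_natCast_add_mul (hκ : Irreducible κ) (ρ : B →+* ZMod p) (x : B) :
    ∃ (m : ℕ) (y : B), x = m + κ * y := by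
  obtain ⟨y, hy⟩ : κ ∣ x - (ρ x).val := by simp [dvd_iff_map_zmod_eq_zero hκ ρ]
  exact ⟨(ρ x).val, y, by rw [← hy, add_sub_cancel]⟩

theorem isUnit_one_add_of_irreducible (hκ : Irreducible κ) : IsUnit (1 + κ) := by
  have hmem : -κ ∈ IsLocalRing.maximalIdeal B :=
    neg_mem ((IsLocalRing.mem_maximalIdeal κ).2 hκ.not_isUnit)
  simpa using IsLocalRing.isUnit_one_sub_self_of_mem_nonunits (-κ) hmem

variable [CommSemiring R] [Module R B]

variable {ε : B →ₗ[R] B →ₗ[R] B} {ρ : B →+* ZMod p} {d : ℕ} {α : ℕ → ℕ → ZMod p}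

/-- Multiplication by `κ ^ (p - 1)` commutes with `ε` up to a unit, which gives the statement for
`𝔭 ^ a × B`; equivariance moves powers of `κ` between the arguments. -/
theorem raisesOrderBy_of_forall_dvd (hκ : Irreducible κ) (hpκ : Associated (p : B) (κ ^ (p - 1)))
    (hequiv : ∀ x y, ε ((1 + κ) * x) ((1 + κ) * y) = (1 + κ) * ε x y)
    (hdvd : ∀ x y, κ ^ (d + (p - 2)) ∣ ε x y) : RaisesOrderBy κ ε d := by
  have hp : 2 ≤ p := (Fact.out : p.Prime).two_le
  have hleft (a : ℕ) (x y : B) : κ ^ (a + d) ∣ ε (κ ^ a * x) y := by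
    induction a using Nat.strong_induction_on generalizing x with
    | _ a ih =>
      rcases Nat.lt_or_ge a (p - 1) with ha | ha
      · exact (pow_dvd_pow κ (by lia)).trans (hdvd _ y)
      · obtain ⟨b, rfl⟩ := Nat.exists_eq_add_of_le' ha
        obtain ⟨u, hu⟩ := hpκ
        have hshift : κ ^ (b + (p - 1)) * x = p * (κ ^ b * (u * x)) := by
          rw [pow_add, ← hu]
          ring
        rw [hshift, map_natCast_mul_left, add_right_comm, pow_add, mul_comm (p : B)]
        exact mul_dvd_mul (ih b (by lia) _) (Associated.dvd' ⟨u, hu⟩)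
  obtain ⟨v, hv⟩ := isUnit_one_add_of_irreducible hκ
  intro a b x y
  induction b generalizing a x with
  | zero => simpa using hleft a x y
  | succ b ih =>
    let x' : B := v⁻¹ * x
    have hmove : ε (κ ^ a * x) (κ ^ (b + 1) * y) =
        κ * ε (κ ^ a * x') (κ ^ b * y) - ε (κ ^ (a + 1) * x') (κ ^ b * y) := by
      have hx : κ ^ a * x = (1 + κ) * (κ ^ a * x') := by
        rw [mul_left_comm, ← hv, Units.mul_inv_cancel_left]
      rw [hx, pow_succ', pow_succ', mul_assoc, mul_assoc κ]
      exact map_mul_eq_sub hequiv _ _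
    rw [hmove]
    refine dvd_sub ?_ ?_
    · rw [show a + (b + 1) + d = a + b + d + 1 by ring, pow_succ']
      exact mul_dvd_mul_left κ (ih a x')
    · rw [show a + (b + 1) + d = a + 1 + b + d by ring]
      exact ih (a + 1) x'

theorem exists_raisesOrderBy_maximal (hκ : Irreducible κ) (hε : ε ≠ 0)
    (hraise : RaisesOrderBy κ ε d) :
    ∃ e, d ≤ e ∧ RaisesOrderBy κ ε e ∧ ¬RaisesOrderBy κ ε (e + 1) := by
  obtain ⟨x, y, hxy⟩ : ∃ x y, ε x y ≠ 0 := by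
    by_contra! hzero
    exact hε (LinearMap.ext₂ hzero)
  obtain ⟨n, hn⟩ := FiniteMultiplicity.of_not_isUnit hκ.not_isUnit hxy
  have hexists : ∃ e, ¬RaisesOrderBy κ ε (d + e + 1) := by
    refine ⟨n, fun h => hn ?_⟩
    have hdvd : κ ^ (d + n + 1) ∣ ε x y := by simpa using h 0 0 x y
    exact (pow_dvd_pow κ (by lia)).trans hdvd
  classical
  refine ⟨d + Nat.find hexists, Nat.le_add_right _ _, ?_, Nat.find_spec hexists⟩
  rcases h : Nat.find hexists with _ | m
  · exact hraise
  · exact not_not.1 (Nat.find_min hexists (by lia))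

theorem exists_isLeading (hκ : Irreducible κ) (ρ : B →+* ZMod p) (hraise : RaisesOrderBy κ ε d) :
    ∃ α, IsLeading κ ρ ε d α := by
  choose r hr using hraise
  refine ⟨fun j k => ρ (r j k 1 1), fun j k x y => ⟨r j k x y, hr j k x y, ?_⟩⟩
  obtain ⟨m, x', rfl⟩ := exists_eq_natCast_add_mul hκ ρ x
  obtain ⟨n, y', rfl⟩ := exists_eq_natCast_add_mul hκ ρ y
  have hρ : ρ κ = 0 := (dvd_iff_map_zmod_eq_zero hκ ρ).1 dvd_rfl
  have hleft (z : B) : ε (κ ^ j * (m + κ * x')) z =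
      m * ε (κ ^ j * 1) z + ε (κ ^ (j + 1) * x') z := by
    rw [← map_natCast_mul_left, ← LinearMap.add_apply, ← map_add]
    ring_nf
  have hright (z : B) : ε z (κ ^ k * (n + κ * y')) =
      n * ε z (κ ^ k * 1) + ε z (κ ^ (k + 1) * y') := by
    rw [← map_natCast_mul_right, ← map_add]
    ring_nf
  have hκr : r j k (m + κ * x') (n + κ * y') = m * n * r j k 1 1 +
      κ * (m * r j (k + 1) 1 y' + r (j + 1) k x' (n + κ * y')) := by
    refine mul_left_cancel₀ (pow_ne_zero (j + k + d) hκ.ne_zero) ?_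
    rw [← hr, hleft, hr (j + 1), hright, hr, hr]
    ring
  simp only [hκr, hρ, map_add, map_mul, map_natCast]
  ring

namespace IsLeading

variable (hα : IsLeading κ ρ ε d α)
include hα

theorem isEquivariantSystem (hκ : Irreducible κ) (hpκ : Associated (p : B) (κ ^ (p - 1)))
    (halt : ε.IsAlt) (hequiv : ∀ x y, ε ((1 + κ) * x) ((1 + κ) * y) = (1 + κ) * ε x y) :
    IsEquivariantSystem α where
  periodic := hα.periodic hκ.ne_zero hpκ
  self j := by
    have hzero : ε (κ ^ j * 1) (κ ^ j * 1) = κ ^ (j + j + d) * 0 := by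
      rw [halt.self_eq_zero, mul_zero]
    simpa using (hα.coeff_eq hκ.ne_zero hzero).symm
  neg_swap j k := by
    obtain ⟨r, hr, hρ⟩ := hα j k 1 1
    have hswap : ε (κ ^ k * 1) (κ ^ j * 1) = κ ^ (k + j + d) * -r := by
      rw [← halt.neg, hr, add_comm k j, mul_neg]
    simpa [hρ] using hα.coeff_eq hκ.ne_zero hswap
  eq_add j k := by
    obtain ⟨r, hr, hρ⟩ := hα j k 1 1
    obtain ⟨s, hs, hσ⟩ := hα (j + 1) k 1 1
    have hmove : ε (κ ^ j * (1 + κ)) (κ ^ (k + 1) * 1) = κ ^ (j + (k + 1) + d) * (r - s) := by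
      rw [mul_comm _ (1 + κ), mul_one, pow_succ', map_mul_eq_sub hequiv, ← pow_succ']
      simp only [mul_one] at hr hs
      rw [hr, hs]
      ring
    have hρκ : ρ κ = 0 := (dvd_iff_map_zmod_eq_zero hκ ρ).1 dvd_rfl
    have hcoeff := hα.coeff_eq hκ.ne_zero hmove
    simp only [map_sub, map_add, map_one, hρ, hσ, hρκ, add_zero, mul_one] at hcoeff
    linear_combination hcoeff

theorem exists_ne_zero (hκ : Irreducible κ) (hraise : ¬RaisesOrderBy κ ε (d + 1)) :
    ∃ j k, α j k ≠ 0 := by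
  by_contra! hzero
  refine hraise fun a b x y => ?_
  obtain ⟨r, hr, hρ⟩ := hα a b x y
  rw [hzero, zero_mul, zero_mul, ← dvd_iff_map_zmod_eq_zero hκ] at hρ
  rw [hr, ← add_assoc, pow_succ]
  exact mul_dvd_mul_left _ hρ

end IsLeading

theorem exists_jacobiator_dvd (hκ : Irreducible κ) (ρ : B →+* ZMod p)
    (hpκ : Associated (p : B) (κ ^ (p - 1))) (halt : ε.IsAlt)
    (hequiv : ∀ x y, ε ((1 + κ) * x) ((1 + κ) * y) = (1 + κ) * ε x y) (hε : ε ≠ 0)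
    (hdvd : ∀ x y, κ ^ (d + (p - 2)) ∣ ε x y) :
    ∃ e, d ≤ e ∧ RaisesOrderBy κ ε e ∧
      ∃ x y z, jacobiator ε x y z ∣ κ ^ (2 * (p - 2) + 2 * e) := by
  obtain ⟨e, hde, hraise, hmax⟩ := exists_raisesOrderBy_maximal hκ hε
    (raisesOrderBy_of_forall_dvd hκ hpκ hequiv hdvd)
  obtain ⟨α, hα⟩ := exists_isLeading hκ ρ hraise
  obtain ⟨a, ha, b, hb, hab⟩ :=
    (hα.isEquivariantSystem hκ hpκ halt hequiv).exists_jacobiDefect_ne_zero e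
      (hα.exists_ne_zero hκ hmax)
  obtain ⟨r, hr, hρ⟩ := hα.exists_jacobiator_eq a b 0
  refine ⟨e, hde, hraise, κ ^ a, κ ^ b, κ ^ 0, ?_⟩
  rw [hr, (isUnit_of_map_zmod_ne_zero hκ ρ (hρ ▸ hab)).mul_right_dvd]
  exact pow_dvd_pow κ (by lia)

end Leading

section Cyclotomic

variable {p : ℕ} [Fact p.Prime] {B : Type*} [CommRing B] {θ : B}

section Algebra

variable [Algebra ℤ_[p] B]

theorem finite_of_adjoin_eq_top (hθ : IsPrimitiveRoot θ p)
    (hadj : Algebra.adjoin ℤ_[p] {θ} = ⊤) : Module.Finite ℤ_[p] B := by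
  refine ⟨?_⟩
  rw [← Algebra.top_toSubmodule, ← hadj]
  exact (hθ.isIntegral (Fact.out : p.Prime).pos).tower_top.fg_adjoin_singleton

theorem natCast_mem_of_isMaximal [Algebra.IsIntegral ℤ_[p] B] (M : Ideal B) [M.IsMaximal] :
    (p : B) ∈ M := by
  have hcomap := IsLocalRing.eq_maximalIdeal
    (Ideal.isMaximal_comap_of_isIntegral_of_isMaximal (R := ℤ_[p]) M)
  have : (p : ℤ_[p]) ∈ M.comap (algebraMap ℤ_[p] B) := by
    rw [hcomap, PadicInt.maximalIdeal_eq_span_p]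
    exact Ideal.mem_span_singleton_self _
  simpa using this

end Algebra

variable [IsDomain B]

theorem associated_natCast_sub_one_pow (hθ : IsPrimitiveRoot θ p) :
    Associated (p : B) ((θ - 1) ^ (p - 1)) := by
  have hp : p - 1 + 1 = p := Nat.sub_add_cancel (Fact.out : p.Prime).one_lt.le
  have hprod : ∏ k ∈ Finset.range (p - 1), (1 - θ ^ (k + 1)) = (p : B) := by
    rw [IsPrimitiveRoot.prod_one_sub_pow_eq_order (hp.symm ▸ hθ), ← Nat.cast_add_one, hp]
  have hassoc : ∀ k ∈ Finset.range (p - 1), Associated (1 - θ ^ (k + 1)) (θ - 1) := by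
    intro k hk
    have hcop : (k + 1).Coprime p :=
      (Nat.coprime_of_lt_prime k.succ_ne_zero (Nat.add_lt_of_lt_sub (Finset.mem_range.1 hk))
        Fact.out).symm
    rw [← neg_sub]
    exact (hθ.associated_sub_one_pow_sub_one_of_coprime hcop).symm.neg_left
  simpa [hprod] using Associated.prod _ _ _ hassoc

theorem sub_one_dvd_natCast (hθ : IsPrimitiveRoot θ p) : θ - 1 ∣ (p : B) :=
  (dvd_pow_self _ (Nat.sub_pos_of_lt (Fact.out : p.Prime).one_lt).ne').trans
    (associated_natCast_sub_one_pow hθ).dvd'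

variable [Algebra ℤ_[p] B]

theorem exists_sub_one_dvd_sub_natCast (hθ : IsPrimitiveRoot θ p)
    (hadj : Algebra.adjoin ℤ_[p] {θ} = ⊤) (x : B) : ∃ m : ℕ, θ - 1 ∣ x - m := by
  have hx : x ∈ Algebra.adjoin ℤ_[p] {θ} := hadj ▸ Algebra.mem_top
  induction hx using Algebra.adjoin_induction with
  | mem x hx => exact ⟨1, by rw [Set.mem_singleton_iff.1 hx, Nat.cast_one]⟩
  | algebraMap c =>
    refine ⟨c.zmodRepr, (sub_one_dvd_natCast hθ).trans ?_⟩
    have := PadicInt.sub_zmodRepr_mem c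
    rw [PadicInt.maximalIdeal_eq_span_p, Ideal.mem_span_singleton] at this
    simpa using (algebraMap ℤ_[p] B).map_dvd this
  | add x y _ _ hx hy =>
    obtain ⟨m, hm⟩ := hx
    obtain ⟨n, hn⟩ := hy
    refine ⟨m + n, ?_⟩
    rw [Nat.cast_add, add_sub_add_comm]
    exact dvd_add hm hn
  | mul x y _ _ hx hy =>
    obtain ⟨m, hm⟩ := hx
    obtain ⟨n, hn⟩ := hy
    refine ⟨m * n, ?_⟩
    rw [Nat.cast_mul, show x * y - m * n = x * (y - n) + n * (x - m) by ring]
    exact dvd_add (hn.mul_left x) (hm.mul_left _)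

theorem eq_span_sub_one_of_isMaximal (hθ : IsPrimitiveRoot θ p)
    (hadj : Algebra.adjoin ℤ_[p] {θ} = ⊤) (M : Ideal B) [hM : M.IsMaximal] :
    M = Ideal.span {θ - 1} := by
  have := finite_of_adjoin_eq_top hθ hadj
  have hpM : (p : B) ∈ M := natCast_mem_of_isMaximal M
  have hκ : θ - 1 ∈ M := hM.isPrime.mem_of_pow_mem _
    (M.mem_of_dvd (associated_natCast_sub_one_pow hθ).dvd hpM)
  refine le_antisymm (fun x hx => ?_) ((Ideal.span_singleton_le_iff_mem M).2 hκ)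
  obtain ⟨m, hm⟩ := exists_sub_one_dvd_sub_natCast hθ hadj x
  have hmM : (m : B) ∈ M := by simpa using M.sub_mem hx (M.mem_of_dvd hm hκ)
  have hpm : p ∣ m := by
    by_contra hnd
    have hcop := ((Nat.Prime.coprime_iff_not_dvd Fact.out).2 hnd).isCoprime.map (Int.castRingHom B)
    obtain ⟨a, b, hab⟩ := hcop
    refine hM.ne_top (M.eq_top_iff_one.2 (hab ▸ ?_))
    simpa using M.add_mem (M.mul_mem_left a hpM) (M.mul_mem_left b hmM)
  rw [Ideal.mem_span_singleton, ← sub_add_cancel x m]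
  exact dvd_add hm ((sub_one_dvd_natCast hθ).trans (Nat.cast_dvd_cast hpm))

theorem isDiscreteValuationRing_of_adjoin_eq_top (hθ : IsPrimitiveRoot θ p)
    (hadj : Algebra.adjoin ℤ_[p] {θ} = ⊤) : IsDiscreteValuationRing B := by
  have := finite_of_adjoin_eq_top hθ hadj
  have : IsNoetherianRing B := .of_finite ℤ_[p] B
  have hspan (M : Ideal B) (hM : M.IsMaximal) := eq_span_sub_one_of_isMaximal hθ hadj M
  obtain ⟨M, hM⟩ := Ideal.exists_maximal B
  have : IsLocalRing B :=
    .of_unique_max_ideal ⟨M, hM, fun N hN => (hspan N hN).trans (hspan M hM).symm⟩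
  have hmax := hspan _ (IsLocalRing.maximalIdeal.isMaximal B)
  have hfield : ¬IsField B := by
    rw [IsLocalRing.isField_iff_maximalIdeal_eq, hmax, Ideal.span_singleton_eq_bot]
    exact sub_ne_zero.2 (hθ.ne_one (Fact.out : p.Prime).one_lt)
  have hprincipal : (IsLocalRing.maximalIdeal B).IsPrincipal := ⟨θ - 1, hmax⟩
  exact ((IsDiscreteValuationRing.TFAE B hfield).out 0 4).2 hprincipal

theorem irreducible_sub_one [IsDiscreteValuationRing B] (hθ : IsPrimitiveRoot θ p)
    (hadj : Algebra.adjoin ℤ_[p] {θ} = ⊤) : Irreducible (θ - 1) :=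
  (IsDiscreteValuationRing.irreducible_iff_uniformizer _).2 (eq_span_sub_one_of_isMaximal hθ hadj _)

theorem nonempty_ringHom_zmod (hθ : IsPrimitiveRoot θ p)
    (hadj : Algebra.adjoin ℤ_[p] {θ} = ⊤) : Nonempty (B →+* ZMod p) := by
  have := finite_of_adjoin_eq_top hθ hadj
  obtain ⟨M, hM⟩ := Ideal.exists_maximal B
  have hMspan := eq_span_sub_one_of_isMaximal hθ hadj M
  have : CharP (B ⧸ M) p := by
    rw [CharP.charP_iff_prime_eq_zero Fact.out]
    exact Ideal.Quotient.eq_zero_iff_mem.2 (natCast_mem_of_isMaximal M)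
  let f : ZMod p →+* B ⧸ M := ZMod.castHom dvd_rfl _
  have hf : Function.Surjective f := by
    intro x
    obtain ⟨x, rfl⟩ := Ideal.Quotient.mk_surjective x
    obtain ⟨m, hm⟩ := exists_sub_one_dvd_sub_natCast hθ hadj x
    refine ⟨m, ?_⟩
    rw [map_natCast, eq_comm]
    exact Ideal.Quotient.eq.2 (hMspan ▸ Ideal.mem_span_singleton.2 hm)
  exact ⟨(RingEquiv.ofBijective f ⟨f.injective, hf⟩).symm.toRingHom.comp (Ideal.Quotient.mk M)⟩

variable {K : Type*} [Field K] [Algebra ℚ_[p] K] [Algebra ℤ_[p] K] [IsScalarTower ℤ_[p] ℚ_[p] K]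

theorem isFractionRing_adjoin {s : Set K} (hgen : Algebra.adjoin ℚ_[p] s = ⊤) :
    IsFractionRing (Algebra.adjoin ℤ_[p] s) K := by
  refine .of_field _ _ fun z => ?_
  obtain ⟨⟨d, hd⟩, hdz⟩ := multiple_mem_adjoin_of_mem_localization_adjoin
    (nonZeroDivisors ℤ_[p]) ℚ_[p] s z (hgen ▸ Algebra.mem_top)
  refine ⟨⟨_, hdz⟩, algebraMap ℤ_[p] _ d, ?_⟩
  have : algebraMap ℤ_[p] K d ≠ 0 := by
    rw [IsScalarTower.algebraMap_apply ℤ_[p] ℚ_[p] K]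
    simpa using nonZeroDivisors.ne_zero hd
  rw [← IsScalarTower.algebraMap_apply, eq_div_iff this, mul_comm, ← Algebra.smul_def]
  rfl

theorem adjoin_integralClosure_eq_top {θ : integralClosure ℤ_[p] K}
    (hθ : IsPrimitiveRoot (θ : K) p) (hgen : Algebra.adjoin ℚ_[p] {(θ : K)} = ⊤) :
    Algebra.adjoin ℤ_[p] {θ} = ⊤ := by
  let A := Algebra.adjoin ℤ_[p] {(θ : K)}
  let θA : A := ⟨θ, Algebra.self_mem_adjoin_singleton _ _⟩
  have hθA : IsPrimitiveRoot θA p := IsPrimitiveRoot.coe_submonoidClass_iff.1 hθ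
  have hadj : Algebra.adjoin ℤ_[p] {θA} = ⊤ := by
    rw [← Algebra.adjoin_adjoin_coe_preimage (R := ℤ_[p]) (s := {(θ : K)})]
    congr 1
    ext x
    exact Subtype.ext_iff
  have := isDiscreteValuationRing_of_adjoin_eq_top hθA hadj
  have := isFractionRing_adjoin hgen
  refine eq_top_iff.2 fun x _ => ?_
  obtain ⟨y, hy⟩ := IsIntegrallyClosed.isIntegral_iff.1 (x.2.tower_top : IsIntegral A (x : K))
  have hmem : (x : K) ∈ A := hy ▸ y.2
  have hmap : (Algebra.adjoin ℤ_[p] {θ}).map (integralClosure ℤ_[p] K).val = A := by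
    rw [AlgHom.map_adjoin_singleton]
    rfl
  rw [← hmap] at hmem
  obtain ⟨y, hy, hyx⟩ := hmem
  exact Subtype.coe_injective hyx ▸ hy

end Cyclotomic

section Rescaling

variable {R B : Type*} [CommRing B] [CommSemiring R]

/-- `ε` is the form that `γ` induces on the ideal generated by `c` when this ideal is identified
with the ring itself through `x ↦ c * x`. -/
def IsRescaling [Module R B] (c : B) (γ ε : B →ₗ[R] B →ₗ[R] B) : Prop :=
  ∀ x y, γ (c * x) (c * y) = c * ε x y

theorem exists_isRescaling [IsDomain B] [Algebra R B] {c : B} (hc : c ≠ 0)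
    {γ : B →ₗ[R] B →ₗ[R] B} (hdvd : ∀ x y, c ∣ γ (c * x) (c * y)) :
    ∃ ε : B →ₗ[R] B →ₗ[R] B, IsRescaling c γ ε := by
  choose f hf using hdvd
  refine ⟨LinearMap.mk₂ R f (fun x y z => ?_) (fun r x y => ?_) (fun x y z => ?_)
    fun r x y => ?_, hf⟩ <;> apply mul_left_cancel₀ hc <;>
    simp only [mul_add, mul_smul_comm, ← hf, map_add, map_smul, LinearMap.add_apply,
      LinearMap.smul_apply]

namespace IsRescaling

variable [Module R B] {c : B} {γ ε : B →ₗ[R] B →ₗ[R] B} (h : IsRescaling c γ ε)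
include h

theorem jacobiator_eq (x y z : B) :
    jacobiator γ (c * x) (c * y) (c * z) = c * jacobiator ε x y z := by
  simp only [jacobiator, h _ _, mul_add]

theorem ne_zero (hγ : γ ≠ 0) {n : ℕ} (hn : IsLeftRegular (n : B)) (hc : c ∣ n) : ε ≠ 0 := by
  rintro rfl
  obtain ⟨b, hb⟩ := hc
  refine hγ (LinearMap.ext₂ fun x y => hn (hn ?_))
  have hzero : γ (n * x) (n * y) = 0 := by
    rw [hb, mul_assoc, mul_assoc, h, LinearMap.zero_apply, LinearMap.zero_apply, mul_zero]
  simpa [map_natCast_mul_left, map_natCast_mul_right] using hzero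

variable [IsDomain B] (hc : c ≠ 0)
include hc

theorem isAlt (hγ : γ.IsAlt) : ε.IsAlt := fun x =>
  (mul_eq_zero_iff_left hc).1 ((h x x).symm.trans (hγ (c * x)))

theorem map_mul_mul {t : B} (hγ : ∀ x y, γ (t * x) (t * y) = t * γ x y) (x y : B) :
    ε (t * x) (t * y) = t * ε x y := by
  apply mul_left_cancel₀ hc
  rw [← h, mul_left_comm c t x, mul_left_comm c t y, hγ, h, mul_left_comm]

end IsRescaling

end Rescaling

theorem exists_isLeast_sub_mul_le {s : Set ℕ} {a d m : ℕ} (hd : 0 < d)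
    (hs : ∀ k, m < (k + 1) * d → k + a ∈ s) : ∃ c, IsLeast s c ∧ (c - a) * d ≤ m := by
  have hne : s.Nonempty :=
    ⟨m + a, hs m (m.lt_succ_self.trans_le (Nat.le_mul_of_pos_right _ hd))⟩
  refine ⟨sInf s, ⟨Nat.sInf_mem hne, fun _ => Nat.sInf_le⟩, ?_⟩
  by_contra! hlt
  obtain ⟨k, hk⟩ : ∃ k, sInf s - a = k + 1 :=
    Nat.exists_eq_add_one_of_ne_zero (by rintro h; simp [h] at hlt)
  have := Nat.sInf_le (hs k (hk ▸ hlt))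
  lia

section Frame

variable {p : ℕ} [Fact p.Prime] {K : Type} [Field K] [Algebra ℤ_[p] K] {θ : 𝒪 p K}
  {γ ε : 𝒪 p K →ₗ[ℤ_[p]] 𝒪 p K →ₗ[ℤ_[p]] 𝒪 p K} {i : ℕ}

theorem mem_pid_pow_iff {n : ℕ} {x : 𝒪 p K} : x ∈ pid p K θ ^ n ↔ (θ - 1) ^ n ∣ x := by
  rw [pid, Ideal.span_singleton_pow, Ideal.mem_span_singleton]

theorem span_image2_le {I J L : Ideal (𝒪 p K)} (h : ∀ x ∈ I, ∀ y ∈ J, γ x y ∈ L) :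
    Ideal.span (Set.image2 (fun x y => γ x y) (I : Set (𝒪 p K)) J) ≤ L :=
  Ideal.span_le.2 (Set.image2_subset_iff.2 h)

theorem Wid_le_pid_pow {e : ℕ}
    (hε : IsRescaling ((θ - 1) ^ i) γ ε) (hraise : RaisesOrderBy (θ - 1) ε e)
    (hγi : ∀ x ∈ pid p K θ ^ i, ∀ y ∈ pid p K θ ^ i, γ x y ∈ pid p K θ ^ (2 * i + 1)) (k : ℕ) :
    Wid p K θ γ i (k + 2) ≤ pid p K θ ^ (2 * i + 1 + k * e) := by
  induction k with
  | zero =>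
    rw [zero_mul, add_zero]
    exact span_image2_le hγi
  | succ k ih =>
    refine span_image2_le fun x hx y hy => ?_
    obtain ⟨x, rfl⟩ := mem_pid_pow_iff.1 (ih hx)
    obtain ⟨y, rfl⟩ := mem_pid_pow_iff.1 hy
    rw [mem_pid_pow_iff, show 2 * i + 1 + k * e = i + (i + 1 + k * e) by ring,
      show 2 * i + 1 + (k + 1) * e = i + (i + 1 + k * e + 0 + e) by ring, pow_add _ i, pow_add _ i,
      mul_assoc, hε]
    exact mul_dvd_mul_left _ (by simpa using hraise (i + 1 + k * e) 0 x y)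

theorem pid_pow_le_Jid {m : ℕ}
    (hε : IsRescaling ((θ - 1) ^ i) γ ε)
    (hm : ∃ x y z, jacobiator ε x y z ∣ (θ - 1) ^ m) :
    pid p K θ ^ (i + m) ≤ Jid p K θ γ i := by
  obtain ⟨x, y, z, hxyz⟩ := hm
  have hmem (u : 𝒪 p K) : (θ - 1) ^ i * u ∈ pid p K θ ^ i := mem_pid_pow_iff.2 ⟨u, rfl⟩
  rw [pid, Ideal.span_singleton_pow, Ideal.span_singleton_le_iff_mem, pow_add]
  refine Ideal.mem_of_dvd _ (mul_dvd_mul_left _ hxyz) (Ideal.subset_span ?_)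
  exact ⟨_, hmem x, _, hmem y, _, hmem z, (hε.jacobiator_eq x y z).symm⟩

theorem exists_Wid_le_pid_pow_le_Jid [Algebra ℚ_[p] K]
    [IsScalarTower ℤ_[p] ℚ_[p] K] (hθ : IsPrimitiveRoot (θ : K) p)
    (hgen : Algebra.adjoin ℚ_[p] {(θ : K)} = ⊤) (hγ : IsPEquivariant p K θ γ) (hγ0 : γ ≠ 0)
    (hi : p ≤ i + 2)
    (hγi : ∀ x ∈ pid p K θ ^ i, ∀ y ∈ pid p K θ ^ i, γ x y ∈ pid p K θ ^ (2 * i + 1)) :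
    ∃ e, i + 3 - p ≤ e ∧ (∀ k, Wid p K θ γ i (k + 2) ≤ pid p K θ ^ (2 * i + 1 + k * e)) ∧
      pid p K θ ^ (i + (2 * (p - 2) + 2 * e)) ≤ Jid p K θ γ i := by
  have hp : 2 ≤ p := (Fact.out : p.Prime).two_le
  have hθO : IsPrimitiveRoot θ p := IsPrimitiveRoot.coe_submonoidClass_iff.1 hθ
  have hadj := adjoin_integralClosure_eq_top hθ hgen
  have := isDiscreteValuationRing_of_adjoin_eq_top hθO hadj
  have hκ := irreducible_sub_one hθO hadj
  have hpκ := associated_natCast_sub_one_pow hθO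
  have hc : (θ - 1) ^ i ≠ 0 := pow_ne_zero i hκ.ne_zero
  obtain ⟨ρ⟩ := nonempty_ringHom_zmod hθO hadj
  have hdvd (x y : 𝒪 p K) : (θ - 1) ^ i * (θ - 1) ^ (i + 1) ∣
      γ ((θ - 1) ^ i * x) ((θ - 1) ^ i * y) := by
    rw [← pow_add, ← add_assoc, ← two_mul, ← mem_pid_pow_iff]
    exact hγi _ (mem_pid_pow_iff.2 ⟨x, rfl⟩) _ (mem_pid_pow_iff.2 ⟨y, rfl⟩)
  obtain ⟨ε, hε⟩ := exists_isRescaling hc fun x y => dvd_of_mul_right_dvd (hdvd x y)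
  have hε0 : ε ≠ 0 := by
    refine hε.ne_zero hγ0 (n := p ^ i) (IsLeftCancelMulZero.mul_left_cancel_of_ne_zero ?_) ?_
    · rw [Nat.cast_pow]
      exact pow_ne_zero i (hpκ.ne_zero_iff.2 (pow_ne_zero _ hκ.ne_zero))
    · rw [Nat.cast_pow]
      exact pow_dvd_pow_of_dvd (sub_one_dvd_natCast hθO) i
  obtain ⟨e, he, hraise, hjac⟩ := exists_jacobiator_dvd hκ ρ hpκ (hε.isAlt hc hγ.1)
    (by simpa using hε.map_mul_mul hc hγ.2) hε0 (d := i + 3 - p) fun x y => by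
      rw [show i + 3 - p + (p - 2) = i + 1 by lia, ← mul_dvd_mul_iff_left hc, ← hε]
      exact hdvd x y
  exact ⟨e, he, Wid_le_pid_pow hε hraise hγi, pid_pow_le_Jid hε hjac⟩

theorem sub_one_ne_zero_of_isPrimitiveRoot (hθ : IsPrimitiveRoot (θ : K) p) : θ - 1 ≠ 0 :=
  sub_ne_zero.2 ((IsPrimitiveRoot.coe_submonoidClass_iff.1 hθ).ne_one
    (Fact.out : p.Prime).one_lt)

theorem ne_zero_of_inHhat (hθ : IsPrimitiveRoot (θ : K) p) (hγi : InHhat p K θ i γ) :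
    γ ≠ 0 := by
  rintro rfl
  have hmem : (θ - 1) ^ (2 * i + 1) ∈ (pid p K θ ^ (2 * i + 1)).restrictScalars ℤ :=
    mem_pid_pow_iff.2 dvd_rfl
  rw [← hγi] at hmem
  refine pow_ne_zero (2 * i + 1) (sub_one_ne_zero_of_isPrimitiveRoot hθ)
    ((Submodule.mem_bot ℤ).1 ?_)
  exact Submodule.span_le.2 (Set.image2_subset_iff.2 fun _ _ _ _ => rfl) hmem

theorem apply_mem_of_inHhat (hγi : InHhat p K θ i γ) {x y : 𝒪 p K} (hx : x ∈ pid p K θ ^ i)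
    (hy : y ∈ pid p K θ ^ i) : γ x y ∈ pid p K θ ^ (2 * i + 1) := by
  have hmem := Submodule.subset_span (R := ℤ) (Set.mem_image2_of_mem (f := fun x y => γ x y) hx hy)
  exact (hγi ▸ hmem : γ x y ∈ (pid p K θ ^ (2 * i + 1)).restrictScalars ℤ)

end Frame

theorem frame_class_bound_general (hθ : IsPrimitiveRoot (θ : K) p)
    (hgen : Algebra.adjoin ℚ_[p] {(θ : K)} = ⊤) (hγ : IsPEquivariant p K θ γ) (hγ0 : γ ≠ 0)
    (i : ℕ) (hi : p ≤ i + 2)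
    (hγi : ∀ x ∈ pid p K θ ^ i, ∀ y ∈ pid p K θ ^ i, γ x y ∈ pid p K θ ^ (2 * i + 1)) :
    Jid p K θ γ i ≠ ⊥ ∧ ∃ c : ℕ, IsLeast {c' : ℕ | Wid p K θ γ i (c' + 1) ≤ Jid p K θ γ i} c ∧
      (c - 3) * (i + 3 - p) ≤ p - 3 := by
  obtain ⟨e, he, hW, hJ⟩ := exists_Wid_le_pid_pow_le_Jid hθ hgen hγ hγ0 hi hγi
  have hpid : pid p K θ ≠ ⊥ := by
    rw [pid, Ne, Ideal.span_singleton_eq_bot]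
    exact sub_one_ne_zero_of_isPrimitiveRoot hθ
  refine ⟨ne_bot_of_le_ne_bot (pow_ne_zero _ hpid) hJ,
    exists_isLeast_sub_mul_le (by lia) fun k hk => ?_⟩
  refine (hW (k + 2)).trans ((Ideal.pow_le_pow_right ?_).trans hJ)
  have hke : k * (i + 3 - p) ≤ k * e := Nat.mul_le_mul_left k he
  rw [add_mul] at hk ⊢
  lia

/-- For `i > p−2` and `γ ∈ Ĥ_i` with `J_i(γ) ≠ 0`, the Lie ring
`L_i(γ) = 𝔭^i/J_i(γ)` is nilpotent of class `c` (the least `c` with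
`W_{c+1}(i) ⊆ J_i(γ)`), and `(c−3)·(i−(p−2)) ≤ 2p−8`. -/
theorem frame_class_bound (hp : 5 ≤ p) (hθ : IsPrimitiveRoot (θ : K) p)
    (hgen : Algebra.adjoin ℚ_[p] {(θ : K)} = ⊤)
    (hγ : IsPEquivariant p K θ γ)
    (i : ℕ) (hi : p - 2 < i) (hγi : InHhat p K θ i γ) (hJ : Jid p K θ γ i ≠ ⊥) :
    ∃ c : ℕ, IsLeast {c' : ℕ | Wid p K θ γ i (c' + 1) ≤ Jid p K θ γ i} c ∧
      (c - 3) * (i - (p - 2)) ≤ 2 * p - 8 := by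
  obtain ⟨-, c, hc, hle⟩ := frame_class_bound_general p K θ γ hθ hgen hγ
    (ne_zero_of_inHhat hθ hγi) i (by lia) fun _ hx _ hy => apply_mem_of_inHhat hγi hx hy
  exact ⟨c, hc, (Nat.mul_le_mul_left _ (by lia)).trans (hle.trans (by lia))⟩

end MaximalClassFrame
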